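/- For every n ≥ 1 and every weakly decreasing integer sequence k_1 ≥ k_2 ≥ ⋯ ≥ k_n, the set 𝒢_n(k_1,…,k_n) of Generalized Monotone Triangles with bottom row (k_1,…,k_n) is equal to the set of Decreasing Monotone Triangles with bottom row (k_1,…,k_n). -/

import Mathlib

/-- A triangular array of size `n`, encoded as a function `ℕ → ℕ → ℤ` whose
meaningful entries are `a i j` for `1 ≤ j ≤ i ≤ n` (row `i` has entries
`a i 1, …, a i i`), normalized to be `0` outside this region. -/
def IsTri (n : ℕ) (a : ℕ → ℕ → ℤ) : Prop :=
  ∀ i j, ¬ (1 ≤ j ∧ j ≤ i ∧ i ≤ n) → a i j = 0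

/-- A Monotone Triangle of size `n`: strict increase along rows and weak
increase along North-East and South-East diagonals. -/
def IsMT (n : ℕ) (a : ℕ → ℕ → ℤ) : Prop :=
  IsTri n a ∧
  (∀ i j, 1 ≤ j → j + 1 ≤ i → i ≤ n → a i j < a i (j + 1)) ∧
  (∀ i j, 1 ≤ j → j ≤ i → i + 1 ≤ n →
    a (i + 1) j ≤ a i j ∧ a i j ≤ a (i + 1) (j + 1))

/-- A Generalized Monotone Triangle (GMT) of size `n`. -/
def IsGMT (n : ℕ) (a : ℕ → ℕ → ℤ) : Prop :=
  IsTri n a ∧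
  -- (1) each entry is weakly bounded by its SW- and SE-neighbour
  (∀ i j, 1 ≤ j → j ≤ i → i + 1 ≤ n →
    min (a (i + 1) j) (a (i + 1) (j + 1)) ≤ a i j ∧
    a i j ≤ max (a (i + 1) j) (a (i + 1) (j + 1))) ∧
  -- (2) three weakly increasing consecutive entries force strict increase above
  (∀ i j, 1 ≤ j → j + 1 ≤ i → i + 1 ≤ n →
    a (i + 1) j ≤ a (i + 1) (j + 1) → a (i + 1) (j + 1) ≤ a (i + 1) (j + 2) →
    a i j < a i (j + 1)) ∧
  -- (3) equality over a strict descent forces an equal neighbour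
  (∀ i j, 1 ≤ j → j ≤ i → i + 1 ≤ n →
    (a i j = a (i + 1) j → a (i + 1) (j + 1) < a (i + 1) j →
      2 ≤ j ∧ a i (j - 1) = a i j) ∧
    (a (i + 1) (j + 1) < a (i + 1) j → a (i + 1) (j + 1) = a i j →
      j + 1 ≤ i ∧ a i (j + 1) = a i j))

/-- The bottom row of a triangular array of size `n` is `(k 0, …, k (n-1))`
(1-indexed in the array). -/
def BottomRow (n : ℕ) (a : ℕ → ℕ → ℤ) (k : Fin n → ℤ) : Prop :=
  ∀ j : Fin n, a n (j.1 + 1) = k j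

/-- The set of Monotone Triangles of size `n` with bottom row `k`. -/
def MTset (n : ℕ) (k : Fin n → ℤ) : Set (ℕ → ℕ → ℤ) :=
  {a | IsMT n a ∧ BottomRow n a k}

/-- The set `𝒢ₙ(k)` of Generalized Monotone Triangles of size `n` with bottom row `k`. -/
def GMTset (n : ℕ) (k : Fin n → ℤ) : Set (ℕ → ℕ → ℤ) :=
  {a | IsGMT n a ∧ BottomRow n a k}

/-- The positions `(i, j)` of newcomers of a triangular array:
`a (i+1) j > a i j > a (i+1) (j+1)`. -/
def newcomersF (n : ℕ) (a : ℕ → ℕ → ℤ) : Finset (ℕ × ℕ) :=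
  ((Finset.range (n + 1)) ×ˢ (Finset.range (n + 1))).filter (fun p =>
    1 ≤ p.2 ∧ p.2 ≤ p.1 ∧ p.1 + 1 ≤ n ∧
    a p.1 p.2 < a (p.1 + 1) p.2 ∧ a (p.1 + 1) (p.2 + 1) < a p.1 p.2)

/-- The positions `(i, j)` of sign-changing pairs `(a i j, a i (j+1))` of a
triangular array: two equal consecutive entries whose interlaced neighbour
below is also equal to them. -/
def scPairsF (n : ℕ) (a : ℕ → ℕ → ℤ) : Finset (ℕ × ℕ) :=
  ((Finset.range (n + 1)) ×ˢ (Finset.range (n + 1))).filter (fun p =>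
    1 ≤ p.2 ∧ p.2 + 1 ≤ p.1 ∧ p.1 + 1 ≤ n ∧
    a p.1 p.2 = a p.1 (p.2 + 1) ∧ a (p.1 + 1) (p.2 + 1) = a p.1 p.2)

/-- `sc(A)`: the total number of newcomers and sign-changing pairs of `A`. -/
def scT (n : ℕ) (a : ℕ → ℕ → ℤ) : ℕ :=
  (newcomersF n a).card + (scPairsF n a).card

/-- The number of occurrences of `x` in row `i` of the array `a`. -/
def rowCount (a : ℕ → ℕ → ℤ) (i : ℕ) (x : ℤ) : ℕ :=
  ((Finset.Icc 1 i).filter (fun j => a i j = x)).card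

/-- A Decreasing Monotone Triangle (DMT) of size `n`: weak decrease along
North-East and South-East diagonals, each integer appears at most twice in a
row, and two consecutive rows do not contain the same integer exactly once. -/
def IsDMT (n : ℕ) (a : ℕ → ℕ → ℤ) : Prop :=
  IsTri n a ∧
  (∀ i j, 1 ≤ j → j ≤ i → i + 1 ≤ n →
    a i j ≤ a (i + 1) j ∧ a (i + 1) (j + 1) ≤ a i j) ∧
  (∀ i, i ≤ n → ∀ x : ℤ, rowCount a i x ≤ 2) ∧
  (∀ i, i + 1 ≤ n → ∀ x : ℤ, ¬ (rowCount a i x = 1 ∧ rowCount a (i + 1) x = 1))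

/-!
Both notions constrain pairs of consecutive rows only. If the lower row `c` is weakly decreasing,
condition (1) of a GMT says that the upper row `b` interlaces it, `c (j + 1) ≤ b j ≤ c j`, and then
`b` is weakly decreasing too; so, starting from the bottom row, all rows are weakly decreasing. In
such rows equal entries are contiguous, and the counting conditions of a DMT become local: no value
occurs three times in `c` iff no three consecutive entries agree, which is condition (2), and a
value occurs exactly once iff it sits next to no equal entry. By interlacing, a value occurring
exactly once in both `b` and `c` occupies position `j` in `b` and `j` or `j + 1` in `c`, and these
are the two configurations excluded by condition (3).
-/

open Finset

/-- Position `j` of the row `f p, …, f q` is isolated if its entry differs from those of its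
neighbours within the row. In a weakly decreasing row these are the positions of the values that
occur exactly once. -/
def IsIsolated {α : Type*} (f : ℕ → α) (p q j : ℕ) : Prop :=
  (p < j → f (j - 1) ≠ f j) ∧ (j < q → f (j + 1) ≠ f j)

section AntitoneRow

variable {α : Type*} [PartialOrder α] {f : ℕ → α} {p q : ℕ}

lemma eq_left_of_antitoneOn_Icc (hf : AntitoneOn f (Set.Icc p q)) {i j l : ℕ} (hi : p ≤ i)
    (hij : i ≤ j) (hjl : j ≤ l) (hl : l ≤ q) (h : f l = f i) : f j = f i :=
  le_antisymm (hf (by grind) (by grind) hij) (h ▸ hf (by grind) (by grind) hjl)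

lemma IsIsolated.eq_of_eq (hf : AntitoneOn f (Set.Icc p q)) {j l : ℕ} (hj : j ∈ Icc p q)
    (hl : l ∈ Icc p q) (hiso : IsIsolated f p q j) (h : f l = f j) : l = j := by
  rw [mem_Icc] at hj hl
  rcases lt_trichotomy l j with hlt | rfl | hgt
  · have hprev : f (j - 1) = f l :=
      eq_left_of_antitoneOn_Icc hf hl.1 (by omega) (Nat.sub_le j 1) hj.2 h.symm
    exact absurd (hprev.trans h) (hiso.1 (by omega))
  · rfl
  · have hnext : f (j + 1) = f j :=
      eq_left_of_antitoneOn_Icc hf hj.1 (Nat.le_succ j) hgt hl.2 h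
    exact absurd hnext (hiso.2 (by omega))

variable [DecidableEq α]

lemma card_filter_eq_one_iff_exists_isIsolated (hf : AntitoneOn f (Set.Icc p q)) {x : α} :
    #{j ∈ Icc p q | f j = x} = 1 ↔ ∃ j ∈ Icc p q, f j = x ∧ IsIsolated f p q j := by
  simp only [card_eq_one, Finset.ext_iff, mem_filter, mem_singleton]
  constructor
  · rintro ⟨j, hunique⟩
    obtain ⟨hj, hjx⟩ := (hunique j).2 rfl
    rw [mem_Icc] at hj
    refine ⟨j, mem_Icc.2 hj, hjx, fun hp h => ?_, fun hq h => ?_⟩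
    · have := (hunique (j - 1)).1 ⟨mem_Icc.2 (by omega), h.trans hjx⟩
      omega
    · have := (hunique (j + 1)).1 ⟨mem_Icc.2 (by omega), h.trans hjx⟩
      omega
  · rintro ⟨j, hj, rfl, hiso⟩
    exact ⟨j, fun l => ⟨fun h => hiso.eq_of_eq hf hj h.1 h.2, by rintro rfl; exact ⟨hj, rfl⟩⟩⟩

lemma card_filter_eq_le_two_iff (hf : AntitoneOn f (Set.Icc p q)) :
    (∀ x, #{j ∈ Icc p q | f j = x} ≤ 2) ↔ ∀ j, p ≤ j → j + 2 ≤ q → f (j + 2) ≠ f j := by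
  constructor
  · intro hcard j hj hjq h
    have hmid : f (j + 1) = f j :=
      eq_left_of_antitoneOn_Icc hf hj (by omega) (Nat.le_succ (j + 1)) hjq h
    refine (hcard (f j)).not_gt (two_lt_card.2 ⟨j, ?_, j + 1, ?_, j + 2, ?_, ?_⟩) <;> grind
  · intro hne x
    by_contra! hcard
    set s := {j ∈ Icc p q | f j = x}
    have hs : s.Nonempty := card_pos.1 (by omega)
    obtain ⟨hmin, hminx⟩ := mem_filter.1 (s.min'_mem hs)
    obtain ⟨hmax, hmaxx⟩ := mem_filter.1 (s.max'_mem hs)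
    have hsub : s ⊆ Icc (s.min' hs) (s.max' hs) :=
      fun j hj => mem_Icc.2 ⟨s.min'_le j hj, s.le_max' j hj⟩
    have hgap : s.min' hs + 2 ≤ s.max' hs := by
      have := card_le_card hsub
      rw [Nat.card_Icc] at this
      omega
    rw [mem_Icc] at hmin hmax
    exact hne _ hmin.1 (hgap.trans hmax.2)
      (eq_left_of_antitoneOn_Icc hf hmin.1 (Nat.le_add_right _ 2) hgap hmax.2
        (hmaxx.trans hminx.symm))

end AntitoneRow

/-- The row `b 1, …, b n` interlaces the row `c 1, …, c (n + 1)` below it in decreasing order. -/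
def Interlaces {α : Type*} [Preorder α] (n : ℕ) (b c : ℕ → α) : Prop :=
  ∀ j, 1 ≤ j → j ≤ n → b j ≤ c j ∧ c (j + 1) ≤ b j

namespace Interlaces

lemma antitoneOn {α : Type*} [Preorder α] {n : ℕ} {b c : ℕ → α} (h : Interlaces n b c) :
    AntitoneOn b (Set.Icc 1 n) :=
  antitoneOn_of_add_one_le Set.ordConnected_Icc fun j _ hj hj' =>
    (h (j + 1) hj'.1 hj'.2).1.trans (h j hj.1 hj.2).2

variable {α : Type*} [PartialOrder α] {n j : ℕ} {b c : ℕ → α}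

lemma isIsolated_of_eq_left (h : Interlaces n b c) (hj : 1 ≤ j) (hjn : j ≤ n) (heq : b j = c j)
    (hlt : c (j + 1) < c j) (hprev : 1 < j → b (j - 1) ≠ b j) :
    IsIsolated b 1 n j ∧ IsIsolated c 1 (n + 1) j := by
  refine ⟨⟨hprev, fun hn => ?_⟩, fun h1 hc => hprev h1 ?_, fun _ => hlt.ne⟩
  · exact (((h (j + 1) (by omega) hn).1.trans_lt hlt).trans_eq heq.symm).ne
  · obtain ⟨hle, hge⟩ := h (j - 1) (by omega) (by omega)
    rw [Nat.sub_add_cancel hj] at hge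
    rw [heq]
    exact le_antisymm (hle.trans_eq hc) hge

lemma isIsolated_of_eq_right (h : Interlaces n b c) (hj : 1 ≤ j) (hjn : j ≤ n)
    (heq : b j = c (j + 1)) (hlt : c (j + 1) < c j) (hnext : j < n → b (j + 1) ≠ b j) :
    IsIsolated b 1 n j ∧ IsIsolated c 1 (n + 1) (j + 1) := by
  refine ⟨⟨fun h1 => ?_, hnext⟩, fun _ => hlt.ne', fun hn hc => hnext (by omega) ?_⟩
  · have hge := (h (j - 1) (by omega) (by omega)).2
    rw [Nat.sub_add_cancel hj] at hge
    exact ((heq.trans_lt hlt).trans_le hge).ne'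
  · obtain ⟨hle, hge⟩ := h (j + 1) (by omega) (by omega)
    rw [heq]
    exact le_antisymm hle (hc.symm.trans_le hge)

lemma eq_or_eq_add_one_of_isIsolated (h : Interlaces n b c)
    (hc : AntitoneOn c (Set.Icc 1 (n + 1))) {l : ℕ} (hj : 1 ≤ j) (hjn : j ≤ n)
    (hl : l ∈ Icc 1 (n + 1)) (hiso : IsIsolated c 1 (n + 1) l) (heq : c l = b j) :
    l = j ∨ l = j + 1 := by
  obtain ⟨hle, hge⟩ := h j hj hjn
  have hl' := mem_Icc.1 hl
  rcases Nat.lt_or_ge j l with hjl | hlj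
  · have hcb : c (j + 1) = b j := le_antisymm hge (heq ▸ hc (by grind) hl' hjl)
    exact .inr (hiso.eq_of_eq hc hl (mem_Icc.2 (by omega)) (hcb.trans heq.symm)).symm
  · have hcb : c j = b j := le_antisymm (heq ▸ hc hl' (by grind) hlj) hle
    exact .inl (hiso.eq_of_eq hc hl (mem_Icc.2 (by omega)) (hcb.trans heq.symm)).symm

variable [DecidableEq α]

lemma lt_above_iff_card_le_two (h : Interlaces n b c)
    (hc : AntitoneOn c (Set.Icc 1 (n + 1))) :
    (∀ j, 1 ≤ j → j + 1 ≤ n → c j ≤ c (j + 1) → c (j + 1) ≤ c (j + 2) → b j < b (j + 1)) ↔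
      ∀ x, #{j ∈ Icc 1 (n + 1) | c j = x} ≤ 2 := by
  rw [card_filter_eq_le_two_iff hc]
  constructor
  · intro hlt j hj hjn heq
    have hmid : c (j + 1) = c j :=
      eq_left_of_antitoneOn_Icc hc hj (by omega) (Nat.le_succ (j + 1)) hjn heq
    have hle : b (j + 1) ≤ b j := h.antitoneOn (by grind) (by grind) (Nat.le_succ j)
    exact hle.not_gt (hlt j hj (by omega) hmid.ge (hmid.trans heq.symm).le)
  · intro hne j hj hjn hle hle'
    have hge : c (j + 2) ≤ c j := hc (by grind) (by grind) (Nat.le_add_right j 2)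
    exact absurd (hge.antisymm (hle.trans hle')) (hne j hj (by omega))

lemma eq_neighbour_iff_not_card_eq_one (h : Interlaces n b c)
    (hc : AntitoneOn c (Set.Icc 1 (n + 1))) :
    (∀ j, 1 ≤ j → j ≤ n →
      (b j = c j → c (j + 1) < c j → 1 < j ∧ b (j - 1) = b j) ∧
      (c (j + 1) < c j → c (j + 1) = b j → j < n ∧ b (j + 1) = b j)) ↔
    ∀ x, ¬ (#{j ∈ Icc 1 n | b j = x} = 1 ∧ #{j ∈ Icc 1 (n + 1) | c j = x} = 1) := by
  simp only [card_filter_eq_one_iff_exists_isIsolated h.antitoneOn,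
    card_filter_eq_one_iff_exists_isIsolated hc]
  constructor
  · rintro hneighbour _ ⟨⟨j, hj, rfl, hb_iso⟩, l, hl, heq, hc_iso⟩
    obtain ⟨hj, hjn⟩ := mem_Icc.1 hj
    have hstep : c (j + 1) ≤ c j := hc (by grind) (by grind) (Nat.le_succ j)
    obtain ⟨hleft, hright⟩ := hneighbour j hj hjn
    rcases h.eq_or_eq_add_one_of_isIsolated hc hj hjn hl hc_iso heq with rfl | rfl
    · obtain ⟨h1, hprev⟩ := hleft heq.symm (hstep.lt_of_ne (hc_iso.2 (by omega)))
      exact hb_iso.1 h1 hprev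
    · obtain ⟨hn, hnext⟩ := hright (hstep.lt_of_ne (hc_iso.1 (by omega)).symm) heq
      exact hb_iso.2 hn hnext
  · intro hcard j hj hjn
    refine ⟨fun heq hlt => ?_, fun hlt heq => ?_⟩ <;> by_contra hne <;> rw [not_and] at hne
    · obtain ⟨hb_iso, hc_iso⟩ := h.isIsolated_of_eq_left hj hjn heq hlt hne
      exact hcard (b j) ⟨⟨j, mem_Icc.2 ⟨hj, hjn⟩, rfl, hb_iso⟩,
        j, mem_Icc.2 (by omega), heq.symm, hc_iso⟩
    · obtain ⟨hb_iso, hc_iso⟩ := h.isIsolated_of_eq_right hj hjn heq.symm hlt hne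
      exact hcard (b j) ⟨⟨j, mem_Icc.2 ⟨hj, hjn⟩, rfl, hb_iso⟩,
        j + 1, mem_Icc.2 (by omega), heq, hc_iso⟩

end Interlaces

lemma antitoneOn_rows_of_interlaces {α : Type*} [Preorder α] {n : ℕ} {a : ℕ → ℕ → α}
    (hn : AntitoneOn (a n) (Set.Icc 1 n))
    (h : ∀ i < n, AntitoneOn (a (i + 1)) (Set.Icc 1 (i + 1)) → Interlaces i (a i) (a (i + 1)))
    {i : ℕ} (hi : i ≤ n) : AntitoneOn (a i) (Set.Icc 1 i) := by
  induction hi using Nat.decreasingInduction with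
  | self => exact hn
  | of_succ i hi ih => exact (h i hi ih).antitoneOn

/-- The conditions (1), (2), (3) of a GMT on a row `b 1, …, b n` and the row
`c 1, …, c (n + 1)` below it. -/
structure IsGMTStep {α : Type*} [LinearOrder α] (n : ℕ) (b c : ℕ → α) : Prop where
  between : ∀ j, 1 ≤ j → j ≤ n → min (c j) (c (j + 1)) ≤ b j ∧ b j ≤ max (c j) (c (j + 1))
  lt_above : ∀ j, 1 ≤ j → j + 1 ≤ n → c j ≤ c (j + 1) → c (j + 1) ≤ c (j + 2) → b j < b (j + 1)
  eq_neighbour : ∀ j, 1 ≤ j → j ≤ n →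
    (b j = c j → c (j + 1) < c j → 1 < j ∧ b (j - 1) = b j) ∧
    (c (j + 1) < c j → c (j + 1) = b j → j < n ∧ b (j + 1) = b j)

/-- The conditions of a DMT on a row `b 1, …, b n` and the row `c 1, …, c (n + 1)` below it. The
bound on multiplicities is imposed on the lower row only, the top row having a single entry. -/
structure IsDMTStep {α : Type*} [Preorder α] [DecidableEq α] (n : ℕ) (b c : ℕ → α) : Prop where
  interlaces : Interlaces n b c
  card_le_two : ∀ x, #{j ∈ Icc 1 (n + 1) | c j = x} ≤ 2
  not_card_eq_one : ∀ x,
    ¬ (#{j ∈ Icc 1 n | b j = x} = 1 ∧ #{j ∈ Icc 1 (n + 1) | c j = x} = 1)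

section ConsecutiveRows

variable {α : Type*} [LinearOrder α] {n : ℕ} {b c : ℕ → α}

lemma between_iff_interlaces (hc : AntitoneOn c (Set.Icc 1 (n + 1))) :
    (∀ j, 1 ≤ j → j ≤ n → min (c j) (c (j + 1)) ≤ b j ∧ b j ≤ max (c j) (c (j + 1))) ↔
      Interlaces n b c := by
  refine forall₃_congr fun j hj hjn => ?_
  have hstep : c (j + 1) ≤ c j := hc (by grind) (by grind) (Nat.le_succ j)
  rw [min_eq_right hstep, max_eq_left hstep, and_comm]

lemma isGMTStep_iff_isDMTStep (hc : AntitoneOn c (Set.Icc 1 (n + 1))) :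
    IsGMTStep n b c ↔ IsDMTStep n b c := by
  constructor
  · rintro ⟨hbetween, hlt, hneighbour⟩
    have h := (between_iff_interlaces hc).1 hbetween
    exact ⟨h, (h.lt_above_iff_card_le_two hc).1 hlt,
      (h.eq_neighbour_iff_not_card_eq_one hc).1 hneighbour⟩
  · rintro ⟨h, htwo, hone⟩
    exact ⟨(between_iff_interlaces hc).2 h, (h.lt_above_iff_card_le_two hc).2 htwo,
      (h.eq_neighbour_iff_not_card_eq_one hc).2 hone⟩

lemma forall_isGMTStep_iff_forall_isDMTStep {a : ℕ → ℕ → α}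
    (hn : AntitoneOn (a n) (Set.Icc 1 n)) :
    (∀ i < n, IsGMTStep i (a i) (a (i + 1))) ↔ ∀ i < n, IsDMTStep i (a i) (a (i + 1)) := by
  constructor <;> intro h i hi
  · have hc : AntitoneOn (a (i + 1)) (Set.Icc 1 (i + 1)) := antitoneOn_rows_of_interlaces hn
      (fun i hi hc => (between_iff_interlaces hc).1 (h i hi).between) hi
    exact (isGMTStep_iff_isDMTStep hc).1 (h i hi)
  · have hc : AntitoneOn (a (i + 1)) (Set.Icc 1 (i + 1)) := antitoneOn_rows_of_interlaces hn
      (fun i hi _ => (h i hi).interlaces) hi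
    exact (isGMTStep_iff_isDMTStep hc).2 (h i hi)

end ConsecutiveRows

section Triangle

variable {n : ℕ} {a : ℕ → ℕ → ℤ}

lemma isGMT_iff_forall_isGMTStep :
    IsGMT n a ↔ IsTri n a ∧ ∀ i < n, IsGMTStep i (a i) (a (i + 1)) := by
  refine and_congr_right fun _ => ⟨fun ⟨h₁, h₂, h₃⟩ i hi => ?_, fun h => ?_⟩
  · exact ⟨fun j hj hji => h₁ i j hj hji hi, fun j hj hji => h₂ i j hj hji hi,
      fun j hj hji => h₃ i j hj hji hi⟩
  · exact ⟨fun i j hj hji hi => (h i hi).between j hj hji,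
      fun i j hj hji hi => (h i hi).lt_above j hj hji,
      fun i j hj hji hi => (h i hi).eq_neighbour j hj hji⟩

lemma isDMT_iff_forall_isDMTStep :
    IsDMT n a ↔ IsTri n a ∧ ∀ i < n, IsDMTStep i (a i) (a (i + 1)) := by
  refine and_congr_right fun _ => ⟨fun ⟨hdiag, htwo, hone⟩ i hi => ?_, fun h => ?_⟩
  · exact ⟨fun j hj hji => hdiag i j hj hji hi, htwo (i + 1) hi, hone i hi⟩
  · refine ⟨fun i j hj hji hi => (h i hi).interlaces j hj hji, ?_,
      fun i hi => (h i hi).not_card_eq_one⟩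
    rintro (_ | i) hi x
    · simp [rowCount]
    · exact (h i hi).card_le_two x

lemma isGMT_iff_isDMT (hn : AntitoneOn (a n) (Set.Icc 1 n)) : IsGMT n a ↔ IsDMT n a := by
  rw [isGMT_iff_forall_isGMTStep, isDMT_iff_forall_isDMTStep,
    forall_isGMTStep_iff_forall_isDMTStep hn]

lemma BottomRow.antitoneOn {k : Fin n → ℤ} (hb : BottomRow n a k) (hk : Antitone k) :
    AntitoneOn (a n) (Set.Icc 1 n) := by
  have hentry : ∀ j (hj : j ∈ Set.Icc 1 n), a n j = k ⟨j - 1, by grind⟩ := fun j hj => by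
    rw [← hb, Nat.sub_add_cancel hj.1]
  intro i hi j hj hij
  rw [hentry i hi, hentry j hj]
  exact hk (Fin.mk_le_mk.2 (Nat.sub_le_sub_right hij 1))

end Triangle

/-- For every `n ≥ 1` and every weakly decreasing `k`, the set of Generalized
Monotone Triangles with bottom row `k` equals the set of Decreasing Monotone
Triangles with bottom row `k`. -/
theorem GMT_eq_DMT_of_antitone (n : ℕ) (hn : 1 ≤ n)
    (k : Fin n → ℤ) (hk : Antitone k) :
    GMTset n k = {a | IsDMT n a ∧ BottomRow n a k} := by
  ext a
  exact and_congr_left fun hb => isGMT_iff_isDMT (hb.antitoneOn hk)
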